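/- Let M be a matroid with rank function ρ_M, identified with the simplicial complex of its independent sets, and let X be a d-Leray complex over some field F, both on the same finite vertex set V. If M ⊆ X, then there exists a simplex σ ∈ X such that ρ_M(V \ σ) ≤ d. -/

import Mathlib

open Finset

/-- An abstract simplicial complex on the vertex type `V`: a set of finite subsets
("simplices") closed under taking subsets. -/
def IsComplex {V : Type*} (X : Set (Finset V)) : Prop :=
  ∀ σ ∈ X, ∀ τ, τ ⊆ σ → τ ∈ X

variable {V : Type*}

/-- The induced subcomplex `X[S] = {σ ∈ X : σ ⊆ S}`. -/
def induce (X : Set (Finset V)) (S : Finset V) : Set (Finset V) :=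
  {σ | σ ∈ X ∧ σ ⊆ S}

/-- The link `lk(X,τ) = {σ : σ ∪ τ ∈ X, σ ∩ τ = ∅}`; it is the void complex if `τ ∉ X`. -/
def link [DecidableEq V] (X : Set (Finset V)) (τ : Finset V) : Set (Finset V) :=
  {σ | σ ∪ τ ∈ X ∧ Disjoint σ τ}

/-- The star `str(X,τ) = {σ ∈ X : σ ∪ τ ∈ X}`. -/
def star [DecidableEq V] (X : Set (Finset V)) (τ : Finset V) : Set (Finset V) :=
  {σ | σ ∈ X ∧ σ ∪ τ ∈ X}

/-- The Alexander dual `X^∨ = {A ⊆ V : V \ A ∉ X}` of a complex on the finite vertex set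
`V`. -/
def alexDual [Fintype V] [DecidableEq V] (X : Set (Finset V)) : Set (Finset V) :=
  {A | Aᶜ ∉ X}

section Homology

variable (F : Type) [Field F]

/-- The faces of `X` of cardinality `n` (i.e. of dimension `n-1`). -/
def Face (X : Set (Finset V)) (n : ℕ) : Type _ :=
  {σ : Finset V // σ ∈ X ∧ σ.card = n}

/-- Simplicial chains in dimension `n-1`: formal `F`-linear combinations of faces of
cardinality `n`.  Since the empty face spans the degree `n = 0` part, this yields the
*augmented* simplicial chain complex of `X`. -/
def SChain (X : Set (Finset V)) (n : ℕ) : Type _ := Face X n →₀ F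

noncomputable instance (X : Set (Finset V)) (n : ℕ) : AddCommGroup (SChain F X n) :=
  Finsupp.instAddCommGroup

noncomputable instance (X : Set (Finset V)) (n : ℕ) : Module F (SChain F X n) :=
  Finsupp.module (Face X n) F

variable [LinearOrder V]

open Classical in
/-- The boundary of a face of cardinality `n+1`: the alternating sum of its codimension-one
subfaces, with signs determined by the linear order on the vertices. -/
noncomputable def bdryElem (X : Set (Finset V)) (n : ℕ) (σ : Face X (n+1)) :
    SChain F X n :=
  ∑ x ∈ σ.1.attach,
    if h : σ.1.erase ↑x ∈ X then
      ((-1 : F) ^ ((σ.1.filter (fun y => y < (x : V))).card)) •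
        (Finsupp.single (⟨σ.1.erase ↑x, h, by
          rw [Finset.card_erase_of_mem x.2, σ.2.2]; rfl⟩ : Face X n) 1 : SChain F X n)
    else 0

/-- The simplicial boundary map (in degree `0` it is the augmentation `C_0 → C_{-1} ≅ F`
encoded by `scyc`). -/
noncomputable def sbdry (X : Set (Finset V)) (n : ℕ) :
    SChain F X (n+1) →ₗ[F] SChain F X n :=
  Finsupp.lsum F fun σ => LinearMap.toSpanSingleton F (SChain F X n) (bdryElem F X n σ)

/-- The cycles of the augmented simplicial chain complex. -/
noncomputable def scyc (X : Set (Finset V)) : (n : ℕ) → Submodule F (SChain F X n)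
  | 0 => ⊤
  | (n+1) => LinearMap.ker (sbdry F X n)

/-- `RH F X n` is the reduced simplicial homology `h̃_{n-1}(X; F)` of `X` with coefficients
in `F` (faces of cardinality `n` have dimension `n-1`). -/
abbrev RH (X : Set (Finset V)) (n : ℕ) : Type _ :=
  scyc F X n ⧸ Submodule.comap (scyc F X n).subtype (LinearMap.range (sbdry F X n))

/-- `X` is `d`-Leray over `F`: every induced subcomplex has vanishing reduced homology in
all dimensions `i ≥ d`. -/
def IsLeray (d : ℕ) (X : Set (Finset V)) : Prop :=
  ∀ S : Finset V, ∀ i : ℕ, d ≤ i → Subsingleton (RH F (induce X S) (i+1))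

end Homology


/-- The rank `ρ_M(S)` of a set `S` in a matroid `M`: the maximal cardinality of an
independent subset of `S`. -/
noncomputable def matroidRank {V : Type*} (M : Matroid V) (S : Set V) : ℕ :=
  sSup {n | ∃ I : Finset V, ↑I ⊆ S ∧ M.Indep ↑I ∧ I.card = n}

/-- The matroid `M`, identified with the simplicial complex of its independent sets. -/
def indepComplex {V : Type*} (M : Matroid V) : Set (Finset V) :=
  {σ | M.Indep ↑σ}

section Helpers

variable {W : Type} [Fintype W] [LinearOrder W] {F : Type} [Field F]

/-- sign -/
def sg (F : Type) [Field F] (v : W) (τ : Finset W) : F := (-1) ^ (τ.filter (fun y => y < v)).card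

lemma sg_sq (v : W) (τ : Finset W) : sg F v τ * sg F v τ = 1 := by
  unfold sg
  rw [← mul_pow]; simp

lemma sg_insert (u v : W) (τ : Finset W) (h : v ∉ τ) :
    sg F u (insert v τ) = (if v < u then -1 else 1) * sg F u τ := by
  unfold sg
  rw [Finset.filter_insert]
  split_ifs with h1
  · rw [Finset.card_insert_of_notMem (by simp [h]), pow_succ]; ring
  · simp

lemma sg_erase_self (v : W) (τ : Finset W) : sg F v (τ.erase v) = sg F v τ := by
  unfold sg
  congr 2
  ext x
  simp only [Finset.mem_filter, Finset.mem_erase]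
  constructor
  · tauto
  · rintro ⟨a, b⟩; exact ⟨⟨b.ne, a⟩, b⟩

lemma sg_insert_self (v : W) (τ : Finset W) : sg F v (insert v τ) = sg F v τ := by
  by_cases h : v ∈ τ
  · rw [Finset.insert_eq_of_mem h]
  · rw [← sg_erase_self, Finset.erase_insert h]

lemma sg_erase (u v : W) (τ : Finset W) (h : v ∈ τ) :
    sg F u (τ.erase v) = (if v < u then -1 else 1) * sg F u τ := by
  conv_rhs => rw [← Finset.insert_erase h, sg_insert u v _ (Finset.notMem_erase v τ)]
  split_ifs <;> ring

/-- contraction -/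
def io (u : W) : (Finset W → F) →ₗ[F] (Finset W → F) where
  toFun c := fun τ => if u ∈ τ then 0 else sg F u τ * c (insert u τ)
  map_add' a b := by
    ext τ; by_cases h : u ∈ τ <;> simp [h, mul_add]
  map_smul' r a := by
    ext τ; by_cases h : u ∈ τ <;> simp [h]; ring

/-- wedge -/
def ee (v : W) : (Finset W → F) →ₗ[F] (Finset W → F) where
  toFun c := fun σ => if v ∈ σ then sg F v σ * c (σ.erase v) else 0
  map_add' a b := by
    ext τ; by_cases h : v ∈ τ <;> simp [h, mul_add]
  map_smul' r a := by
    ext τ; by_cases h : v ∈ τ <;> simp [h]; ring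

/-- boundary -/
def bd : (Finset W → F) →ₗ[F] (Finset W → F) := ∑ u, io u

lemma io_apply (u : W) (c : Finset W → F) (τ : Finset W) :
    io u c τ = if u ∈ τ then 0 else sg F u τ * c (insert u τ) := rfl

lemma ee_apply (v : W) (c : Finset W → F) (σ : Finset W) :
    ee v c σ = if v ∈ σ then sg F v σ * c (σ.erase v) else 0 := rfl

lemma bd_eq (c : Finset W → F) : bd c = ∑ u, io u c := by
  simp [bd]

lemma bd_apply (c : Finset W → F) (τ : Finset W) :
    bd c τ = ∑ u, if u ∈ τ then 0 else sg F u τ * c (insert u τ) := by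
  rw [bd_eq, Finset.sum_apply]; rfl

lemma io_io (u v : W) (c : Finset W → F) : io u (io v c) = - io v (io u c) := by
  ext τ
  rw [Pi.neg_apply]
  simp only [io_apply, Finset.mem_insert]
  by_cases huv : u = v
  · subst huv; simp
  by_cases hu : u ∈ τ
  · simp [hu]
  by_cases hv : v ∈ τ
  · simp [hv]
  simp only [hu, hv, huv, Ne.symm huv, or_self, if_false]
  rw [sg_insert v u τ hu, sg_insert u v τ hv, Finset.insert_comm]
  rcases lt_or_gt_of_ne huv with h | h
  · simp [h, h.not_gt]; ring
  · simp [h, h.not_gt]; ring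

lemma io_self (u : W) (c : Finset W → F) : io u (io u c) = 0 := by
  ext τ
  simp [io_apply]

lemma sum_antisymm {A : Type} [AddCommGroup A] (s : Finset W) (f : W → W → A)
    (h : ∀ x ∈ s, ∀ y ∈ s, f x y + f y x = 0) (h0 : ∀ x ∈ s, f x x = 0) :
    ∑ x ∈ s, ∑ y ∈ s, f x y = 0 := by
  rw [← Finset.sum_product']
  refine Finset.sum_involution (fun p _ => (p.2, p.1)) ?_ ?_ ?_ ?_
  · rintro ⟨a, b⟩ hp
    rw [Finset.mem_product] at hp
    exact h a hp.1 b hp.2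
  · rintro ⟨a, b⟩ hp hne heq
    rw [Finset.mem_product] at hp
    simp only [Prod.mk.injEq] at heq
    obtain ⟨rfl, _⟩ := heq
    exact hne (h0 _ hp.1)
  · rintro ⟨a, b⟩ hp
    rw [Finset.mem_product] at hp ⊢
    exact ⟨hp.2, hp.1⟩
  · rintro ⟨a, b⟩ hp
    rfl

lemma bd_bd (c : Finset W → F) : bd (bd c) = 0 := by
  rw [bd_eq c, map_sum]
  simp only [bd_eq]
  apply sum_antisymm
  · intro x _ y _
    rw [io_io y x]; simp
  · intro x _
    exact io_self x c

lemma bd_io (v : W) (c : Finset W → F) : bd (io v c) = - io v (bd c) := by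
  rw [bd_eq, bd_eq, map_sum, ← Finset.sum_neg_distrib]
  exact Finset.sum_congr rfl fun u _ => io_io u v c

lemma io_ee (u v : W) (c : Finset W → F) :
    io u (ee v c) = (if u = v then c else 0) - ee v (io u c) := by
  ext τ
  rw [Pi.sub_apply]
  simp only [io_apply, ee_apply, Finset.mem_insert, Finset.mem_erase]
  by_cases huv : u = v
  · subst huv
    by_cases hu : u ∈ τ
    · simp only [hu, if_true, ne_eq, not_true, false_and, if_false,
        Finset.insert_erase hu]
      rw [sg_erase_self, ← mul_assoc, sg_sq]; simp
    · simp only [hu, if_false, true_or, if_true, Finset.erase_insert hu]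
      rw [sg_insert_self, ← mul_assoc, sg_sq]; simp
  · simp only [huv, Ne.symm huv, if_false, false_or, ne_eq, not_false_eq_true, true_and,
      Pi.zero_apply, zero_sub]
    by_cases hu : u ∈ τ
    · simp [hu]
    by_cases hv : v ∈ τ
    · simp only [hu, hv, if_true, if_false]
      rw [sg_insert v u τ hu, sg_erase u v τ hv, Finset.erase_insert_of_ne huv]
      rcases lt_or_gt_of_ne huv with h | h
      · simp [h, h.not_gt]; ring
      · simp [h, h.not_gt]; ring
    · simp [hv]

lemma bd_ee (v : W) (c : Finset W → F) : bd (ee v c) = c - ee v (bd c) := by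
  rw [bd_eq, bd_eq, map_sum]
  simp only [io_ee]
  rw [Finset.sum_sub_distrib]
  simp

lemma ee_io (v : W) (c : Finset W → F) (σ : Finset W) :
    ee v (io v c) σ = if v ∈ σ then c σ else 0 := by
  simp only [io_apply, ee_apply]
  by_cases h : v ∈ σ
  · simp only [h, if_true, Finset.notMem_erase, if_false, Finset.insert_erase h]
    rw [sg_erase_self, ← mul_assoc, sg_sq, one_mul]
  · simp [h]

/-- augmentation property -/
def Aug (I : Set (Finset W)) : Prop :=
  ∀ A ∈ I, ∀ B ∈ I, A.card < B.card → ∃ x ∈ B, x ∉ A ∧ insert x A ∈ I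

lemma Aug.extend {I : Set (Finset W)} (hI : Aug I) {A B : Finset W} (hA : A ∈ I) (hB : B ∈ I)
    (h : A.card ≤ B.card) : ∃ C ∈ I, A ⊆ C ∧ C ⊆ A ∪ B ∧ C.card = B.card := by
  induction hn : B.card - A.card generalizing A with
  | zero => exact ⟨A, hA, subset_rfl, Finset.subset_union_left, by omega⟩
  | succ n ih =>
    obtain ⟨x, hxB, hxA, hx⟩ := hI A hA B hB (by omega)
    have hc := Finset.card_insert_of_notMem hxA
    obtain ⟨C, hC, h1, h2, h3⟩ := ih hx (by omega) (by omega)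
    refine ⟨C, hC, (Finset.subset_insert _ _).trans h1, h2.trans ?_, h3⟩
    intro y hy
    simp only [Finset.mem_union, Finset.mem_insert] at hy ⊢
    rcases hy with (rfl | hy) | hy
    · exact Or.inr hxB
    · exact Or.inl hy
    · exact Or.inr hy

lemma matroid_acyclic (S : Finset W) : ∀ (I : Set (Finset W)), IsComplex I → Aug I →
    ∀ (k : ℕ), (∃ B ∈ I, B ⊆ S ∧ k < B.card) → ∀ c : Finset W → F,
    (∀ σ, c σ ≠ 0 → σ ∈ I ∧ σ ⊆ S ∧ σ.card = k) → bd c = 0 →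
    ∃ b : Finset W → F, (∀ σ, b σ ≠ 0 → σ ∈ I ∧ σ ⊆ S ∧ σ.card = k + 1) ∧ bd b = c := by
  induction S using Finset.induction_on with
  | empty =>
    rintro I - - k ⟨B, -, hB, hk⟩
    rw [Finset.subset_empty] at hB
    subst hB; simp at hk
  | insert v S hvS ih =>
    intro I hI hA k hB c hc hbc
    by_cases hcase : ∃ B ∈ I, B ⊆ S ∧ k < B.card
    · by_cases hv : ∃ σ, v ∈ σ ∧ c σ ≠ 0
      · obtain ⟨σ₀, hvσ, hσ₀⟩ := hv
        obtain ⟨h1, h2, h3⟩ := hc _ hσ₀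
        have hvI : {v} ∈ I := hI _ h1 _ (by simpa using hvσ)
        obtain ⟨k, rfl⟩ : ∃ j, k = j + 1 := by
          have := Finset.card_pos.2 ⟨v, hvσ⟩
          exact ⟨k - 1, by omega⟩
        set I' : Set (Finset W) := {σ | v ∉ σ ∧ insert v σ ∈ I} with hI'
        have hI'c : IsComplex I' := by
          rintro σ ⟨ha, hb⟩ τ hτ
          exact ⟨fun h => ha (hτ h), hI _ hb _ (Finset.insert_subset_insert _ hτ)⟩
        have hI'A : Aug I' := by
          rintro A ⟨ha, hb⟩ B ⟨ha', hb'⟩ hlt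
          obtain ⟨x, hx, hx', hx''⟩ := hA _ hb _ hb' (by
            rw [Finset.card_insert_of_notMem ha, Finset.card_insert_of_notMem ha']; omega)
          simp only [Finset.mem_insert, not_or] at hx hx'
          refine ⟨x, hx.resolve_left hx'.1, hx'.2, ?_, ?_⟩
          · simp [ha, Ne.symm hx'.1]
          · rwa [Finset.insert_comm]
        have hI'B : ∃ B ∈ I', B ⊆ S ∧ k < B.card := by
          obtain ⟨B, hB, hBS, hBk⟩ := hcase
          obtain ⟨C, hC, hC1, hC2, hC3⟩ := hA.extend hvI hB (by rw [Finset.card_singleton]; omega)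
          have hvC : v ∈ C := hC1 (by simp)
          refine ⟨C.erase v, ⟨by simp, by rwa [Finset.insert_erase hvC]⟩, ?_, ?_⟩
          · intro x hx
            rw [Finset.mem_erase] at hx
            have := hC2 hx.2
            simp only [Finset.mem_union, Finset.mem_singleton] at this
            exact hBS (this.resolve_left hx.1)
          · rw [Finset.card_erase_of_mem hvC]; omega
        obtain ⟨b1, hb1, hb1'⟩ := ih I' hI'c hI'A k hI'B (io v c) (by
          intro σ hσ
          rw [io_apply] at hσ
          by_cases hvσ : v ∈ σ
          · simp [hvσ] at hσ
          · simp only [hvσ, if_false] at hσ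
            obtain ⟨g1, g2, g3⟩ := hc _ (right_ne_zero_of_mul hσ)
            refine ⟨⟨hvσ, g1⟩, ?_, ?_⟩
            · rwa [Finset.insert_subset_insert_iff hvσ] at g2
            · rw [Finset.card_insert_of_notMem hvσ] at g3; omega) (by
          rw [bd_io, hbc]; simp)
        have hb1v : ∀ σ, v ∈ σ → b1 σ = 0 := by
          intro σ h
          by_contra hne
          exact (hb1 _ hne).1.1 h
        have key2 : ∀ σ, (c + bd (ee v b1)) σ = if v ∈ σ then 0 else c σ + b1 σ := by
          intro σ
          rw [bd_ee, hb1', Pi.add_apply, Pi.sub_apply, ee_io]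
          split_ifs with h
          · rw [hb1v σ h]; ring
          · ring
        obtain ⟨b', hb', hb''⟩ := ih I hI hA (k+1) hcase (c + bd (ee v b1)) (by
          intro σ hσ
          rw [key2] at hσ
          by_cases hvσ : v ∈ σ
          · simp [hvσ] at hσ
          simp only [hvσ, if_false] at hσ
          by_cases hcσ : c σ = 0
          · have : b1 σ ≠ 0 := by
              intro h; simp [hcσ, h] at hσ
            obtain ⟨g1, g2, g3⟩ := hb1 _ this
            exact ⟨hI _ g1.2 _ (Finset.subset_insert _ _), g2, g3⟩
          · obtain ⟨g1, g2, g3⟩ := hc _ hcσ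
            exact ⟨g1, (Finset.subset_insert_iff_of_notMem hvσ).1 g2, g3⟩) (by
          rw [map_add, bd_bd, hbc]; simp)
        refine ⟨b' - ee v b1, ?_, ?_⟩
        · intro σ hσ
          by_cases hbσ : b' σ = 0
          · rw [Pi.sub_apply, hbσ, zero_sub, neg_ne_zero, ee_apply] at hσ
            by_cases hvσ : v ∈ σ
            · simp only [hvσ, if_true] at hσ
              obtain ⟨g1, g2, g3⟩ := hb1 _ (right_ne_zero_of_mul hσ)
              refine ⟨?_, ?_, ?_⟩
              · have := g1.2
                rwa [Finset.insert_erase hvσ] at this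
              · rwa [Finset.subset_insert_iff]
              · rw [← Finset.card_erase_add_one hvσ, g3]
            · simp [hvσ] at hσ
          · obtain ⟨g1, g2, g3⟩ := hb' _ hbσ
            exact ⟨g1, g2.trans (Finset.subset_insert _ _), g3⟩
        · rw [map_sub, hb'']; abel
      · push Not at hv
        obtain ⟨b, hb, hb'⟩ := ih I hI hA k hcase c (by
          intro σ hσ
          obtain ⟨g1, g2, g3⟩ := hc _ hσ
          refine ⟨g1, ?_, g3⟩
          refine (Finset.subset_insert_iff_of_notMem ?_).1 g2
          intro h
          exact hσ (hv σ h)) hbc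
        refine ⟨b, ?_, hb'⟩
        intro σ hσ
        obtain ⟨g1, g2, g3⟩ := hb _ hσ
        exact ⟨g1, g2.trans (Finset.subset_insert _ _), g3⟩
    · refine ⟨ee v c, ?_, by rw [bd_ee, hbc]; simp⟩
      intro σ hσ
      rw [ee_apply] at hσ
      by_cases hvσ : v ∈ σ
      · simp only [hvσ, if_true] at hσ
        obtain ⟨g1, g2, g3⟩ := hc _ (right_ne_zero_of_mul hσ)
        obtain ⟨B, hB, hBS, hBk⟩ := hB
        obtain ⟨C, hC, hC1, hC2, hC3⟩ := hA.extend g1 hB (by omega)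
        have hCS : C ⊆ insert v S := hC2.trans (Finset.union_subset g2 hBS)
        have hvC : v ∈ C := by
          by_contra h
          exact hcase ⟨C, hC, (Finset.subset_insert_iff_of_notMem h).1 hCS, by omega⟩
        have hσC : σ ⊆ C := by
          rw [← Finset.insert_erase hvσ]
          exact Finset.insert_subset hvC hC1
        refine ⟨hI _ hC _ hσC, hσC.trans hCS, ?_⟩
        rw [← Finset.card_erase_add_one hvσ, g3]
      · simp [hvσ] at hσ

/-- extension by zero -/
noncomputable def ext0 (X : Set (Finset W)) (n : ℕ) : SChain F X n →ₗ[F] (Finset W → F) :=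
  Finsupp.lsum F fun σ => LinearMap.toSpanSingleton F (Finset W → F) (Pi.single σ.1 1)

lemma ext0_single (X : Set (Finset W)) (n : ℕ) (σ : Face X n) (a : F) :
    ext0 X n (Finsupp.single σ a : Face X n →₀ F) = a • Pi.single σ.1 1 := by
  unfold ext0
  erw [Finsupp.lsum_single]
  simp

lemma ext0_apply (X : Set (Finset W)) (n : ℕ) (c : SChain F X n) (σ : Face X n) :
    ext0 X n c σ.1 = (show Face X n →₀ F from c) σ := by
  classical
  induction c using Finsupp.induction_linear with
  | zero => erw [map_zero]; rfl
  | add f g hf hg =>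
    erw [map_add, Pi.add_apply, hf, hg]; rfl
  | single a b =>
    rw [ext0_single]
    show _ = (Finsupp.single a b : Face X n →₀ F) σ
    rw [Finsupp.single_apply, Pi.smul_apply, Pi.single_apply]
    by_cases h : a = σ
    · subst h; simp
    · have : ¬ (σ.1 = a.1) := fun h' => h (Subtype.ext h'.symm)
      simp [h, this]

lemma ext0_supp (X : Set (Finset W)) (n : ℕ) (c : SChain F X n) (σ : Finset W)
    (h : ext0 X n c σ ≠ 0) : σ ∈ X ∧ σ.card = n := by
  classical
  by_contra hn
  apply h
  clear h
  induction c using Finsupp.induction_linear with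
  | zero => erw [map_zero]; rfl
  | add f g hf hg =>
    erw [map_add, Pi.add_apply, hf, hg]; simp
  | single a b =>
    rw [ext0_single, Pi.smul_apply, Pi.single_apply]
    have : ¬ (σ = a.1) := fun h' => hn (h' ▸ a.2)
    simp [this]

lemma bd_single (σ : Finset W) :
    bd (Pi.single σ (1 : F)) = ∑ x ∈ σ, sg F x σ • (Pi.single (σ.erase x) 1 : Finset W → F) := by
  ext τ
  rw [bd_apply, Finset.sum_apply]
  rw [← Finset.sum_subset (Finset.subset_univ σ)]
  · apply Finset.sum_congr rfl
    intro x hx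
    simp only [Pi.smul_apply, Pi.single_apply, smul_eq_mul]
    by_cases h : τ = σ.erase x
    · subst h
      simp [Finset.insert_erase hx, sg_erase_self]
    · simp only [h, if_false, mul_zero]
      split_ifs with h1 h2
      · rfl
      · exact absurd (by rw [← h2, Finset.erase_insert h1]) h
      · simp
  · intro x _ hx
    simp only [Pi.single_apply]
    split_ifs with h1 h2
    · rfl
    · exact absurd (h2 ▸ Finset.mem_insert_self x τ) hx
    · simp

lemma ext0_sbdry (X : Set (Finset W)) (hX : IsComplex X) (n : ℕ) (c : SChain F X (n+1)) :
    ext0 X n (sbdry F X n c) = bd (ext0 X (n+1) c) := by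
  classical
  induction c using Finsupp.induction_linear with
  | zero => erw [map_zero, map_zero]
  | add f g hf hg =>
    erw [map_add, map_add, map_add, map_add, hf, hg]
  | single a b =>
    rw [ext0_single, map_smul, bd_single]
    unfold sbdry
    erw [Finsupp.lsum_single]
    rw [LinearMap.toSpanSingleton_apply, map_smul]
    congr 1
    unfold bdryElem
    rw [map_sum, ← Finset.sum_attach a.1]
    apply Finset.sum_congr rfl
    intro x _
    refine (congrArg (ext0 X n) (dif_pos (hX _ a.2.1 _ (Finset.erase_subset _ _)))).trans ?_
    refine (LinearMap.map_smul (ext0 X n) _ _).trans ?_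
    refine (congrArg (fun z => _ • z) ((ext0_single X n _ 1).trans (one_smul F _))).trans ?_
    rfl

lemma leray_acyclic (d : ℕ) (X : Set (Finset W)) (hX : IsComplex X) (hL : IsLeray F d X)
    (S : Finset W) (k : ℕ) (hk : d < k) (c : Finset W → F)
    (hc : ∀ σ, c σ ≠ 0 → σ ∈ X ∧ σ ⊆ S ∧ σ.card = k) (hbc : bd c = 0) :
    ∃ b : Finset W → F, (∀ σ, b σ ≠ 0 → σ ∈ X ∧ σ ⊆ S ∧ σ.card = k + 1) ∧ bd b = c := by
  classical
  obtain ⟨i, rfl⟩ : ∃ i, k = i + 1 := ⟨k - 1, by omega⟩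
  have hsub := hL S i (by omega)
  set Y := induce X S with hY
  have hYc : IsComplex Y := fun σ hσ τ hτ => ⟨hX _ hσ.1 _ hτ, hτ.trans hσ.2⟩
  have : Finite (Face Y (i+1)) := Subtype.finite
  let c' : SChain F Y (i+1) := (Finsupp.equivFunOnFinite.symm (fun σ => c σ.1) : Face Y (i+1) →₀ F)
  have hc' : ext0 Y (i+1) c' = c := by
    ext σ
    by_cases h : σ ∈ Y ∧ σ.card = i + 1
    · rw [ext0_apply Y (i+1) c' ⟨σ, h⟩]
      rfl
    · have h1 : c σ = 0 := by
        by_contra h1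
        obtain ⟨g1, g2, g3⟩ := hc _ h1
        exact h ⟨⟨g1, g2⟩, g3⟩
      rw [h1]
      by_contra h2
      exact h (ext0_supp _ _ _ _ h2)
  have inj : ∀ n, ∀ x : SChain F Y n, ext0 Y n x = 0 → x = 0 := by
    intro n x hx
    refine Finsupp.ext (fun σ => ?_)
    have := ext0_apply Y n x σ
    rw [hx] at this
    exact this.symm
  have hcyc : c' ∈ scyc F Y (i+1) := by
    show c' ∈ LinearMap.ker (sbdry F Y i)
    rw [LinearMap.mem_ker]
    apply inj
    rw [ext0_sbdry Y hYc, hc', hbc]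
  have h0 := (Submodule.Quotient.mk_eq_zero _).1 (hsub.elim
    (Submodule.Quotient.mk (⟨c', hcyc⟩ : scyc F Y (i+1))) 0)
  obtain ⟨b, hb⟩ := h0
  refine ⟨ext0 Y (i+1+1) b, ?_, ?_⟩
  · intro σ hσ
    obtain ⟨g1, g2⟩ := ext0_supp _ _ _ _ hσ
    exact ⟨g1.1, g1.2, g2⟩
  · rw [← ext0_sbdry Y hYc, hb]
    exact hc'

/-- right-hand side of the defining equation of the cubical chain map -/
def rhs (ψ : Finset W → Finset W → Finset W → F) (α γ : Finset W) : Finset W → F :=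
  if γ = ∅ then Pi.single ∅ 1
  else ∑ v ∈ γ, sg F v γ • (ψ α (γ.erase v) - ψ (insert v α) (γ.erase v))

/-- the properties required -/
def Good (d : ℕ) (X I : Set (Finset W)) (ψ : Finset W → Finset W → Finset W → F)
    (α γ : Finset W) : Prop :=
  (∀ σ, ψ α γ σ ≠ 0 → σ ∈ X ∧ Disjoint σ α ∧ σ.card = γ.card + 1 ∧ (γ.card ≤ d → σ ∈ I)) ∧
  bd (ψ α γ) = rhs ψ α γ

lemma bd_single_empty : bd (Pi.single (∅ : Finset W) (1 : F)) = 0 := by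
  rw [bd_single]; simp

lemma bd_rhs (ψ : Finset W → Finset W → Finset W → F) (α γ : Finset W)
    (h1 : ∀ v ∈ γ, bd (ψ α (γ.erase v)) = rhs ψ α (γ.erase v))
    (h2 : ∀ v ∈ γ, bd (ψ (insert v α) (γ.erase v)) = rhs ψ (insert v α) (γ.erase v)) :
    bd (rhs ψ α γ) = 0 := by
  by_cases hγ : γ = ∅
  · rw [rhs, if_pos hγ, bd_single_empty]
  rw [rhs, if_neg hγ, map_sum]
  let f : W → W → Finset W → F := fun x y => if x = y then 0 else
    (sg F x γ * sg F y (γ.erase x)) •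
      ((ψ α ((γ.erase x).erase y) - ψ (insert y α) ((γ.erase x).erase y)) -
       (ψ (insert x α) ((γ.erase x).erase y) - ψ (insert y (insert x α)) ((γ.erase x).erase y)))
  trans ∑ x ∈ γ, ∑ y ∈ γ, f x y
  · apply Finset.sum_congr rfl
    intro x hx
    rw [map_smul, map_sub, h1 x hx, h2 x hx]
    have : ∑ y ∈ γ, f x y = ∑ y ∈ γ.erase x, f x y := by
      rw [← Finset.add_sum_erase _ _ hx]; simp [f]
    rw [this]
    by_cases he : γ.erase x = ∅
    · simp [rhs, he]
    · rw [rhs, rhs, if_neg he, if_neg he, ← Finset.sum_sub_distrib, Finset.smul_sum]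
      apply Finset.sum_congr rfl
      intro y hy
      have hxy : x ≠ y := fun h => by simp [h] at hy
      simp only [f, hxy, if_false]
      rw [← smul_sub, smul_smul]
  · apply sum_antisymm
    · intro x hx y hy
      by_cases hxy : x = y
      · simp [f, hxy]
      simp only [f, hxy, Ne.symm hxy, if_false]
      rw [sg_erase y x γ hx, sg_erase x y γ hy, Finset.erase_right_comm (a := y),
        Finset.insert_comm x y]
      ext τ
      simp only [Pi.add_apply, Pi.smul_apply, Pi.sub_apply, smul_eq_mul, Pi.zero_apply]
      rcases lt_or_gt_of_ne hxy with h | h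
      · simp only [h, h.not_gt, if_true, if_false]; ring
      · simp only [h, h.not_gt, if_true, if_false]; ring
    · intro x _
      simp [f]

lemma exists_good (d : ℕ) (X I : Set (Finset W)) (hX : IsComplex X) (hL : IsLeray F d X)
    (hI : IsComplex I) (hA : Aug I) (h0 : ∅ ∈ I) (hIX : I ⊆ X)
    (hr : ∀ σ ∈ X, ∃ B ∈ I, Disjoint B σ ∧ d < B.card) (n : ℕ) :
    ∃ ψ : Finset W → Finset W → Finset W → F, ∀ α γ, Disjoint α γ → α ∪ γ ∈ X → γ.card < n →
      Good d X I ψ α γ := by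
  classical
  induction n with
  | zero => exact ⟨fun _ _ _ => 0, fun _ _ _ _ h => absurd h (by simp)⟩
  | succ n ih =>
    obtain ⟨ψ, hψ⟩ := ih
    have hex : ∀ α γ, ∃ b : Finset W → F, Disjoint α γ → α ∪ γ ∈ X → γ.card = n →
        (∀ σ, b σ ≠ 0 → σ ∈ X ∧ Disjoint σ α ∧ σ.card = γ.card + 1 ∧ (γ.card ≤ d → σ ∈ I)) ∧
        bd b = rhs ψ α γ := by
      intro α γ
      by_cases hyp : Disjoint α γ ∧ α ∪ γ ∈ X ∧ γ.card = n
      swap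
      · exact ⟨0, fun a b c => absurd ⟨a, b, c⟩ hyp⟩
      obtain ⟨hd, hU, hn⟩ := hyp
      have hg1 : ∀ v ∈ γ, Good d X I ψ α (γ.erase v) := by
        intro v hv
        have := Finset.card_erase_add_one hv
        exact hψ _ _ (hd.mono_right (Finset.erase_subset _ _))
          (hX _ hU _ (Finset.union_subset_union_right (Finset.erase_subset _ _))) (by omega)
      have hg2 : ∀ v ∈ γ, Good d X I ψ (insert v α) (γ.erase v) := by
        intro v hv
        have := Finset.card_erase_add_one hv
        refine hψ _ _ ?_ ?_ (by omega)
        · rw [Finset.disjoint_insert_left]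
          exact ⟨by simp, hd.mono_right (Finset.erase_subset _ _)⟩
        · have : insert v α ∪ γ.erase v = α ∪ γ := by
            rw [Finset.insert_union, ← Finset.union_insert, Finset.insert_erase hv]
          rwa [this]
      have hcyc : bd (rhs ψ α γ) = 0 := bd_rhs ψ α γ (fun v hv => (hg1 v hv).2)
        (fun v hv => (hg2 v hv).2)
      have hsupp : ∀ σ, rhs ψ α γ σ ≠ 0 →
          σ ∈ X ∧ Disjoint σ α ∧ σ.card = γ.card ∧ (γ.card ≤ d → σ ∈ I) := by
        intro σ hσ
        by_cases he : γ = ∅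
        · rw [rhs, if_pos he, Pi.single_apply] at hσ
          have : σ = ∅ := by
            by_contra h; simp [h] at hσ
          subst this
          exact ⟨hIX h0, by simp, by simp [he], fun _ => h0⟩
        · rw [rhs, if_neg he, Finset.sum_apply] at hσ
          obtain ⟨v, hv, hne⟩ := Finset.exists_ne_zero_of_sum_ne_zero hσ
          have hcard := Finset.card_erase_add_one hv
          rw [Pi.smul_apply, Pi.sub_apply] at hne
          by_cases h : ψ α (γ.erase v) σ = 0
          · have h' : ψ (insert v α) (γ.erase v) σ ≠ 0 := by
              intro h'; simp [h, h'] at hne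
            obtain ⟨a1, a2, a3, a4⟩ := (hg2 v hv).1 σ h'
            exact ⟨a1, a2.mono_right (Finset.subset_insert _ _), by omega, fun hh => a4 (by omega)⟩
          · obtain ⟨a1, a2, a3, a4⟩ := (hg1 v hv).1 σ h
            exact ⟨a1, a2, by omega, fun hh => a4 (by omega)⟩
      have hαX : α ∈ X := hX _ hU _ Finset.subset_union_left
      have hcompl : ∀ σ : Finset W, σ ⊆ αᶜ ↔ Disjoint σ α := fun σ =>
        Finset.subset_compl_iff_disjoint_right
      rcases le_or_gt γ.card d with hle | hlt
      · obtain ⟨B, hB, hBd, hBc⟩ := hr α hαX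
        obtain ⟨b, hb, hb'⟩ := matroid_acyclic αᶜ I hI hA γ.card
          ⟨B, hB, (hcompl B).2 hBd, by omega⟩ (rhs ψ α γ) (by
            intro σ hσ
            obtain ⟨a1, a2, a3, a4⟩ := hsupp σ hσ
            exact ⟨a4 hle, (hcompl σ).2 a2, a3⟩) hcyc
        refine ⟨b, fun _ _ _ => ⟨?_, hb'⟩⟩
        intro σ hσ
        obtain ⟨a1, a2, a3⟩ := hb σ hσ
        exact ⟨hIX a1, (hcompl σ).1 a2, a3, fun _ => a1⟩
      · obtain ⟨b, hb, hb'⟩ := leray_acyclic d X hX hL αᶜ γ.card hlt (rhs ψ α γ) (by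
            intro σ hσ
            obtain ⟨a1, a2, a3, a4⟩ := hsupp σ hσ
            exact ⟨a1, (hcompl σ).2 a2, a3⟩) hcyc
        refine ⟨b, fun _ _ _ => ⟨?_, hb'⟩⟩
        intro σ hσ
        obtain ⟨a1, a2, a3⟩ := hb σ hσ
        exact ⟨a1, (hcompl σ).1 a2, a3, fun h => by omega⟩
    choose b hb using hex
    let ψ' : Finset W → Finset W → Finset W → F := fun α γ => if γ.card = n then b α γ else ψ α γ
    have hrhs : ∀ α γ, γ.card ≤ n → rhs ψ' α γ = rhs ψ α γ := by
      intro α γ hle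
      unfold rhs
      split_ifs with h
      · rfl
      · apply Finset.sum_congr rfl
        intro v hv
        have hcard := Finset.card_erase_add_one hv
        have : (γ.erase v).card ≠ n := by omega
        simp only [ψ', this, if_false]
    refine ⟨ψ', ?_⟩
    intro α γ hd hU hlt
    unfold Good
    rw [hrhs α γ (by omega)]
    by_cases hn : γ.card = n
    · have : ψ' α γ = b α γ := by simp only [ψ', hn, if_true]
      rw [this]
      exact hb α γ hd hU hn
    · have : ψ' α γ = ψ α γ := by simp only [ψ', hn, if_false]
      rw [this]
      exact hψ α γ hd hU (by omega)

lemma contra (d : ℕ) (X I : Set (Finset W)) (hX : IsComplex X) (hL : IsLeray F d X)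
    (hI : IsComplex I) (hA : Aug I) (h0 : ∅ ∈ I) (hIX : I ⊆ X)
    (hr : ∀ σ ∈ X, ∃ B ∈ I, Disjoint B σ ∧ d < B.card) : False := by
  classical
  obtain ⟨ψ, hψ⟩ := exists_good (F := F) d X I hX hL hI hA h0 hIX hr (Fintype.card W + 1)
  have hg : ∀ α γ, Disjoint α γ → α ∪ γ ∈ X → Good d X I ψ α γ := fun α γ h h' =>
    hψ α γ h h' (Nat.lt_succ_of_le (Finset.card_le_univ _))
  let h : Finset W → Finset W → F := fun β => if β ∈ X then ψ ∅ β else 0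
  -- the function whose sum is computed in two ways
  let g : Finset W → W → F := fun τ v => if v ∈ τ then 0 else sg F v τ * h τ (insert v τ)
  have hT : ∀ β, bd (h β) β = ∑ v, g β v := fun β => bd_apply _ _
  have hS : ∀ β, bd (h β) β = (if β = ∅ then 1 else 0) +
      ∑ v, if v ∈ β then g (β.erase v) v else 0 := by
    intro β
    by_cases hβ : β ∈ X
    · have hgood := hg ∅ β (by simp) (by simpa using hβ)
      have e1 : h β = ψ ∅ β := by simp only [h, hβ, if_true]
      rw [e1, hgood.2, rhs]
      by_cases he : β = ∅
      · subst he; simp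
      · rw [if_neg he, if_neg he, zero_add, Finset.sum_apply, ← Finset.sum_filter]
        rw [Finset.filter_univ_mem]
        apply Finset.sum_congr rfl
        intro v hv
        have hev : β.erase v ∈ X := hX _ hβ _ (Finset.erase_subset _ _)
        have hz : ψ (insert v ∅) (β.erase v) β = 0 := by
          by_contra hne
          have hG := hg (insert v ∅) (β.erase v) (by simp) (by
            rw [Finset.insert_union, Finset.empty_union, Finset.insert_erase hv]; exact hβ)
          have := (hG.1 _ hne).2.1
          rw [Finset.disjoint_left] at this
          exact this hv (by simp)
        rw [Pi.smul_apply, Pi.sub_apply, hz]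
        simp only [g, h, hev, if_true, Finset.notMem_erase, if_false, Finset.insert_erase hv,
          sg_erase_self, sub_zero, smul_eq_mul]
    · have e1 : h β = 0 := by simp only [h, hβ, if_false]
      have he : β ≠ ∅ := fun he => hβ (he ▸ hIX h0)
      rw [e1, map_zero, if_neg he, zero_add, Pi.zero_apply]
      symm
      apply Finset.sum_eq_zero
      intro v _
      split_ifs with hv
      · simp only [g, Finset.notMem_erase, if_false, Finset.insert_erase hv]
        have : h (β.erase v) β = 0 := by
          by_cases hev : β.erase v ∈ X
          · simp only [h, hev, if_true]
            by_contra hne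
            exact hβ ((hg ∅ (β.erase v) (by simp) (by simpa using hev)).1 _ hne).1
          · simp only [h, hev, if_false, Pi.zero_apply]
        rw [this, mul_zero]
      · rfl
  have hsum : ∀ v, ∑ β : Finset W, (if v ∈ β then g (β.erase v) v else 0) = ∑ β, g β v := by
    intro v
    have e : ∀ β : Finset W, g β v = if v ∉ β then g β v else 0 := by
      intro β
      by_cases hv : v ∈ β
      · simp [g, hv]
      · simp [hv]
    rw [Finset.sum_congr rfl (fun β _ => e β), ← Finset.sum_filter, ← Finset.sum_filter]
    refine Finset.sum_bij' (fun β _ => β.erase v) (fun β _ => insert v β) ?_ ?_ ?_ ?_ ?_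
    · intro β _; simp
    · intro β _; simp
    · intro β hβ
      exact Finset.insert_erase (by simpa using hβ)
    · intro β hβ
      exact Finset.erase_insert (by simpa using hβ)
    · intro β _; rfl
  have total : ∑ β : Finset W, bd (h β) β = 1 + ∑ β : Finset W, bd (h β) β := by
    conv_lhs => rw [Finset.sum_congr rfl (fun β _ => hS β)]
    rw [Finset.sum_add_distrib, Finset.sum_comm, Finset.sum_congr rfl (fun v _ => hsum v),
      Finset.sum_comm, Finset.sum_congr rfl (fun β _ => (hT β).symm)]
    simp
  have : (1 : F) = 0 := by
    linear_combination -total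
  exact one_ne_zero this

end Helpers

/-- **The Topological Colorful Helly Theorem, matroidal version** (Kalai–Meshulam).
Let `M` be a matroid and `X` a `d`-Leray complex over a field `F`, both on the same finite
vertex set `V`.  If `M ⊆ X` then there is a simplex `σ ∈ X` with `ρ_M(V \ σ) ≤ d`. -/
theorem topological_colorful_helly_matroid
    {V : Type} [Fintype V] [LinearOrder V] (F : Type) [Field F]
    (d : ℕ) (X : Set (Finset V)) (hX : IsComplex X)
    (hLeray : IsLeray F d X)
    (M : Matroid V) (hME : M.E = Set.univ)
    (hMX : indepComplex M ⊆ X) :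
    ∃ σ ∈ X, matroidRank M ((↑σ : Set V)ᶜ) ≤ d := by
  classical
  by_contra hcon
  push Not at hcon
  refine contra (F := F) d X (indepComplex M) hX hLeray ?_ ?_ ?_ hMX ?_
  · intro σ hσ τ hτ
    exact Matroid.Indep.subset hσ (by exact_mod_cast hτ)
  · intro A hA B hB hlt
    obtain ⟨x, hx, hx'⟩ := Matroid.Indep.augment hA hB (by
      rw [Set.encard_coe_eq_coe_finsetCard, Set.encard_coe_eq_coe_finsetCard]
      exact_mod_cast hlt)
    refine ⟨x, by simpa using hx.1, by simpa using hx.2, ?_⟩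
    show M.Indep _
    rwa [Finset.coe_insert]
  · show M.Indep _
    simp
  · intro σ hσ
    by_contra hno
    push Not at hno
    refine absurd (hcon σ hσ) (not_lt.2 ?_)
    apply csSup_le
    · exact ⟨0, ∅, by simp, by simp, by simp⟩
    · rintro n ⟨I, hI, hInd, rfl⟩
      refine hno I hInd ?_
      rw [Finset.disjoint_left]
      intro x hx hx'
      exact hI (by exact_mod_cast hx) (by exact_mod_cast hx')
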